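/- There exists an absolute constant K such that for every finite set A of positive real numbers with |A| ≥ 2, one has |A·A|^6 · |A−A|^5 ≥ K · |A|^{14} / (log|A|)^2, where A·A = {a·a' : a,a' ∈ A}. -/

import Mathlib

open Finset Pointwise

noncomputable def dlt (X Y : Finset ℝ) (s : ℝ) : ℕ :=
  ((X ×ˢ Y).filter (fun p => p.1 - p.2 = s)).card

noncomputable def sg (X Y : Finset ℝ) (s : ℝ) : ℕ :=
  ((X ×ˢ Y).filter (fun p => p.1 + p.2 = s)).card

noncomputable def En (X Y : Finset ℝ) : ℝ :=
  ∑ s ∈ X - X, (dlt X X s : ℝ) * (dlt Y Y s : ℝ)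

noncomputable def E3 (X : Finset ℝ) : ℝ :=
  ∑ s ∈ X - X, (dlt X X s : ℝ) ^ 3

noncomputable def E15 (X : Finset ℝ) : ℝ :=
  ∑ s ∈ X - X, (dlt X X s : ℝ) ^ ((3 : ℝ) / 2)

/-!
For `C ⊆ (0, ∞)`, the curves `{(a * c, a - s) : a ∈ A}`, indexed by `c ∈ C` and a shift `s`, are
chains in the product order, and two of them meet in at most one point. Counting pairs of points in
a common cell of a grid on `(A * C) × (-B)` shows that at most `O(|A C| ^ 2 |B| ^ 2 / (|C| t ^ 3))`
elements have `t` or more representations as `a + b`. Summing over `t` bounds the energy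
`E(A, A - A)` and, up to a logarithm, the third moment of the representation function of `A - A`;
both bounds enter the inequality `|A| ^ 8 ≤ |A - A| E(A, A - A) E₃(A)` of Katz–Koester type. Taking
for `C` the larger of the positive and negative parts of `A` (up to sign) makes `|A C| ≤ |A A|`.
-/

open scoped Combinatorics.Additive

section RichChains

lemma monotone_card_filter_lt {α : Type*} [Preorder α] [DecidableLT α] (X : Finset α) :
    Monotone fun x => #{y ∈ X | y < x} :=
  fun _ _ hxy => card_le_card <| monotone_filter_right X fun _ _ hz => hz.trans_le hxy

lemma strictMonoOn_card_filter_lt {α : Type*} [Preorder α] [DecidableLT α] (X : Finset α) :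
    StrictMonoOn (fun x => #{y ∈ X | y < x}) X := fun x hx y _ hxy => by
  refine card_lt_card <| (ssubset_iff_of_subset ?_).2 ⟨x, by simp_all, by simp⟩
  exact monotone_filter_right X fun _ _ hz => hz.trans hxy

lemma exists_monotone_card_filter_eq_mul_le {α : Type*} [LinearOrder α] (X : Finset α) {k : ℕ}
    (hk : 0 < k) :
    ∃ f : α → ℕ, Monotone f ∧ (∀ x ∈ X, f x < k) ∧
      #{p ∈ X ×ˢ X | f p.1 = f p.2} * k ≤ #X * (#X + k) := by
  -- Cut `X` into consecutive blocks of length `q`.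
  set q := #X / k + 1 with hq
  set rank : α → ℕ := fun x => #{y ∈ X | y < x}
  refine ⟨fun x => rank x / q, fun x y hxy =>
    Nat.div_le_div_right (monotone_card_filter_lt X hxy), fun x hx => ?_, ?_⟩
  · have hrank_lt : rank x < #X := card_lt_card (filter_ssubset.2 ⟨x, hx, lt_irrefl x⟩)
    have hq_mul : #X < q * k := by simpa [mul_comm] using Nat.lt_mul_div_succ #X hk
    exact Nat.div_lt_of_lt_mul (hrank_lt.trans hq_mul)
  · have hcard : #{p ∈ X ×ˢ X | rank p.1 / q = rank p.2 / q} ≤ #(X ×ˢ range q) := by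
      refine card_le_card_of_injOn (fun p => (p.1, rank p.2 % q)) (fun p hp => ?_) ?_
      · have hp := mem_product.1 (mem_filter.1 (mem_coe.1 hp)).1
        exact mem_coe.2 (mem_product.2 ⟨hp.1, mem_range.2 (Nat.mod_lt _ (#X / k).succ_pos)⟩)
      · rintro ⟨x, y⟩ hp ⟨x', y'⟩ hp' h
        simp only [coe_filter, mem_product, Set.mem_ofPred_eq] at hp hp'
        simp only [Prod.mk.injEq] at h ⊢
        obtain ⟨rfl, hmod⟩ := h
        refine ⟨rfl, (strictMonoOn_card_filter_lt X).injOn hp.1.2 hp'.1.2 ?_⟩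
        change rank y = rank y'
        rw [← Nat.div_add_mod (rank y) q, ← Nat.div_add_mod (rank y') q, hmod, ← hp.2, hp'.2]
    calc #{p ∈ X ×ˢ X | rank p.1 / q = rank p.2 / q} * k
        ≤ #(X ×ˢ range q) * k := by gcongr
      _ = #X * (#X / k * k + k) := by rw [card_product, card_range, hq]; ring
      _ ≤ #X * (#X + k) := by gcongr; exact Nat.div_mul_le_self _ _

lemma card_le_card_offDiag_filter_eq {α : Type*} {S : Finset α} {c : α → ℕ} {V : ℕ}
    (hc : ∀ a ∈ S, c a < V) (hV : 2 * V ≤ #S) : #S ≤ #{p ∈ S.offDiag | c p.1 = c p.2} := by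
  classical
  have hS : #S = ∑ v ∈ range V, #{a ∈ S | c a = v} :=
    card_eq_sum_card_fiberwise fun a ha => mem_coe.2 (mem_range.2 (hc a ha))
  have hoffDiag : #{p ∈ S.offDiag | c p.1 = c p.2} =
      ∑ v ∈ range V, #({a ∈ S | c a = v}.offDiag) := by
    rw [card_eq_sum_card_fiberwise (f := fun p => c p.1) (t := range V) fun p hp => mem_coe.2 <|
      mem_range.2 <| hc _ (mem_offDiag.1 (mem_filter.1 hp).1).1]
    refine sum_congr rfl fun v _ => congrArg card ?_
    ext ⟨a, b⟩
    simp only [mem_filter, mem_offDiag]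
    grind
  have hfiber (n : ℕ) : 2 * n ≤ n * n - n + 2 := by
    obtain _ | _ | n := n
    · simp
    · simp
    · have : (n + 2) * (n + 2) = n * n + 3 * n + 2 + (n + 2) := by ring
      rw [this, Nat.add_sub_cancel]
      nlinarith
  have hsum : 2 * #S ≤ #{p ∈ S.offDiag | c p.1 = c p.2} + 2 * V := by
    calc 2 * #S = ∑ v ∈ range V, 2 * #{a ∈ S | c a = v} := by rw [hS, mul_sum]
      _ ≤ ∑ v ∈ range V, (#({a ∈ S | c a = v}.offDiag) + 2) :=
        sum_le_sum fun v _ => by rw [offDiag_card]; exact hfiber _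
      _ = #{p ∈ S.offDiag | c p.1 = c p.2} + 2 * V := by
        rw [sum_add_distrib, hoffDiag, sum_const, card_range, smul_eq_mul, mul_comm V]
  lia

lemma eq_and_eq_of_isChain_of_add_eq_add {α β M : Type*} [Preorder α] [Preorder β] [AddCommMonoid M]
    [PartialOrder M] [IsOrderedCancelAddMonoid M] {S : Set (α × β)} (hS : IsChain (· ≤ ·) S)
    {f : α → M} {g : β → M} (hf : Monotone f) (hg : Monotone g) {p q : α × β} (hp : p ∈ S)
    (hq : q ∈ S) (h : f p.1 + g p.2 = f q.1 + g q.2) : f p.1 = f q.1 ∧ g p.2 = g q.2 := by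
  obtain hle | hle := hS.total hp hq
  · exact (add_eq_add_iff_eq_and_eq (hf hle.1) (hg hle.2)).1 h
  · exact ((add_eq_add_iff_eq_and_eq (hf hle.1) (hg hle.2)).1 h.symm).imp Eq.symm Eq.symm

variable {ι α β : Type*} [LinearOrder α] [LinearOrder β] {I : Finset ι}
  {P : ι → Finset (α × β)} {X : Finset α} {Y : Finset β} {t : ℕ}

lemma card_mul_le_card_filter_eq_mul_card_filter_eq {f : α → ℕ} {g : β → ℕ} {k : ℕ}
    (hP : ∀ i ∈ I, IsChain (· ≤ ·) (P i : Set (α × β))) (hPsub : ∀ i ∈ I, P i ⊆ X ×ˢ Y)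
    (hPcard : ∀ i ∈ I, t ≤ #(P i)) (hPinter : (I : Set ι).Pairwise fun i j => #(P i ∩ P j) ≤ 1)
    (hf : Monotone f) (hg : Monotone g) (hfk : ∀ x ∈ X, f x < k) (hgk : ∀ y ∈ Y, g y < k)
    (hkt : 4 * k ≤ t + 2) :
    #I * t ≤ #{p ∈ X ×ˢ X | f p.1 = f p.2} * #{p ∈ Y ×ˢ Y | g p.1 = g p.2} := by
  set cell : α × β → ℕ := fun p => f p.1 + g p.2
  set pairs : ι → Finset ((α × β) × (α × β)) :=
    fun i => {p ∈ (P i).offDiag | cell p.1 = cell p.2}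
  have hpairs_card : ∀ i ∈ I, t ≤ #(pairs i) := fun i hi => by
    refine (hPcard i hi).trans (card_le_card_offDiag_filter_eq (V := 2 * k - 1) (fun p hp => ?_) ?_)
    · have hp := mem_product.1 (hPsub i hi hp)
      have := hfk _ hp.1
      have := hgk _ hp.2
      lia
    · have := hPcard i hi
      lia
  have hpairs_disj : (I : Set ι).PairwiseDisjoint pairs := fun i hi j hj hij => by
    refine disjoint_left.2 fun p hpi hpj => ?_
    obtain ⟨h1i, h2i, hne⟩ := mem_offDiag.1 (mem_filter.1 hpi).1
    obtain ⟨h1j, h2j, -⟩ := mem_offDiag.1 (mem_filter.1 hpj).1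
    exact hne <| card_le_one.1 (hPinter hi hj hij) _ (mem_inter.2 ⟨h1i, h1j⟩) _
      (mem_inter.2 ⟨h2i, h2j⟩)
  calc #I * t ≤ ∑ i ∈ I, #(pairs i) := by simpa using card_nsmul_le_sum I _ t hpairs_card
    _ = #(I.biUnion pairs) := (card_biUnion hpairs_disj).symm
    _ ≤ #({p ∈ X ×ˢ X | f p.1 = f p.2} ×ˢ {p ∈ Y ×ˢ Y | g p.1 = g p.2}) := by
      refine card_le_card_of_injOn (fun p => ((p.1.1, p.2.1), (p.1.2, p.2.2))) (fun p hp => ?_) ?_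
      · obtain ⟨i, hi, hpi⟩ := mem_biUnion.1 (mem_coe.1 hp)
        obtain ⟨hoff, heq⟩ := mem_filter.1 hpi
        obtain ⟨h1, h2, -⟩ := mem_offDiag.1 hoff
        have h1' := mem_product.1 (hPsub i hi h1)
        have h2' := mem_product.1 (hPsub i hi h2)
        have hfg := eq_and_eq_of_isChain_of_add_eq_add (hP i hi) hf hg h1 h2 heq
        simp [h1', h2', hfg]
      · rintro ⟨⟨x, y⟩, ⟨x', y'⟩⟩ - ⟨⟨u, v⟩, ⟨u', v'⟩⟩ - h
        simp_all
    _ = _ := card_product _ _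

/-- An elementary substitute for the Szemerédi–Trotter theorem: on a `k × k` grid of cells with
`k ≈ t / 4`, a chain meets fewer than `2 * k` cells and so has at least `t` ordered pairs of
distinct points sharing a cell, and no such pair lies on two of the chains. -/
lemma card_mul_pow_three_le_of_isChain
    (hP : ∀ i ∈ I, IsChain (· ≤ ·) (P i : Set (α × β))) (hPsub : ∀ i ∈ I, P i ⊆ X ×ˢ Y)
    (hPcard : ∀ i ∈ I, t ≤ #(P i)) (hPinter : (I : Set ι).Pairwise fun i j => #(P i ∩ P j) ≤ 1)
    (ht : 2 ≤ t) (htX : t ≤ #X) (htY : t ≤ #Y) :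
    #I * t ^ 3 ≤ 100 * (#X ^ 2 * #Y ^ 2) := by
  set k := (t + 2) / 4
  have hk : 0 < k := by lia
  obtain ⟨f, hf, hfk, hfX⟩ := exists_monotone_card_filter_eq_mul_le X hk
  obtain ⟨g, hg, hgk, hgY⟩ := exists_monotone_card_filter_eq_mul_le Y hk
  have hI := card_mul_le_card_filter_eq_mul_card_filter_eq hP hPsub hPcard hPinter hf hg hfk hgk
    (by lia)
  calc #I * t ^ 3 = #I * t * t ^ 2 := by ring
    _ ≤ #{p ∈ X ×ˢ X | f p.1 = f p.2} * #{p ∈ Y ×ˢ Y | g p.1 = g p.2} * (5 * k) ^ 2 := by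
      gcongr
      lia
    _ = 25 * (#{p ∈ X ×ˢ X | f p.1 = f p.2} * k) * (#{p ∈ Y ×ˢ Y | g p.1 = g p.2} * k) := by ring
    _ ≤ 25 * (#X * (#X + k)) * (#Y * (#Y + k)) := by gcongr
    _ ≤ 25 * (#X * (#X + #X)) * (#Y * (#Y + #Y)) := by gcongr <;> lia
    _ = 100 * (#X ^ 2 * #Y ^ 2) := by ring

end RichChains

section WeakType

variable {ι : Type*} {s : Finset ι} {r : ι → ℕ} {m : ℕ} {N : ℝ}

lemma sum_sum_Ioc_eq_sum_card_mul (hr : ∀ i ∈ s, r i ≤ m) (k : ℕ) (h : ℕ → ℝ) :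
    ∑ i ∈ s, ∑ j ∈ Ioc k (r i), h j = ∑ j ∈ Ioc k m, #{i ∈ s | j ≤ r i} * h j := by
  rw [sum_comm' (t' := Ioc k m) (s' := fun j => {i ∈ s | j ≤ r i})]
  · simp
  · intro i j
    have := hr i
    simp only [mem_Ioc, mem_filter]
    grind

lemma pow_three_le_sum_Ioc (n : ℕ) : (n : ℝ) ^ 3 ≤ ∑ j ∈ Ioc 0 n, 3 * (j : ℝ) ^ 2 := by
  induction n with
  | zero => simp
  | succ n ih =>
    rw [sum_Ioc_succ_top n.zero_le]
    push_cast
    nlinarith [(Nat.cast_nonneg n : (0 : ℝ) ≤ n)]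

lemma sq_le_mul_add_sum_Ioc (k n : ℕ) : (n : ℝ) ^ 2 ≤ k * n + ∑ j ∈ Ioc k n, 2 * (j : ℝ) := by
  induction n with
  | zero => simp
  | succ n ih =>
    obtain hkn | hkn := le_or_gt k n
    · rw [sum_Ioc_succ_top hkn]
      push_cast
      nlinarith [(Nat.cast_nonneg k : (0 : ℝ) ≤ k)]
    · rw [Ioc_eq_empty_of_le hkn, sum_empty, add_zero, sq]
      gcongr
      exact_mod_cast hkn

lemma sum_pow_three_le_of_card_mul_pow_three_le (hr : ∀ i ∈ s, r i ≤ m)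
    (hN : ∀ t : ℕ, #{i ∈ s | t ≤ r i} * (t : ℝ) ^ 3 ≤ N) :
    ∑ i ∈ s, (r i : ℝ) ^ 3 ≤ 3 * N * (1 + Real.log m) := by
  have hN0 : 0 ≤ N := by simpa using hN 0
  calc ∑ i ∈ s, (r i : ℝ) ^ 3
      ≤ ∑ i ∈ s, ∑ j ∈ Ioc 0 (r i), 3 * (j : ℝ) ^ 2 := sum_le_sum fun i _ => pow_three_le_sum_Ioc _
    _ = ∑ j ∈ Ioc 0 m, #{i ∈ s | j ≤ r i} * (3 * (j : ℝ) ^ 2) := sum_sum_Ioc_eq_sum_card_mul hr _ _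
    _ ≤ ∑ j ∈ Ioc 0 m, 3 * N * (j : ℝ)⁻¹ := by
      refine sum_le_sum fun j hj => ?_
      have hj0 : (0 : ℝ) < j := by exact_mod_cast (mem_Ioc.1 hj).1
      rw [← div_eq_mul_inv, le_div_iff₀ hj0]
      linarith [hN j]
    _ = 3 * N * (harmonic m : ℝ) := by
      rw [← mul_sum, harmonic_eq_sum_Icc]
      push_cast
      rfl
    _ ≤ 3 * N * (1 + Real.log m) := by
      gcongr
      exact harmonic_le_one_add_log m

lemma sum_sq_le_mul_sum_add_div (hN : ∀ t : ℕ, #{i ∈ s | t ≤ r i} * (t : ℝ) ^ 3 ≤ N) (k : ℕ) :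
    ∑ i ∈ s, (r i : ℝ) ^ 2 ≤ k * ∑ i ∈ s, (r i : ℝ) + 4 * N / (k + 1) := by
  have hN0 : 0 ≤ N := by simpa using hN 0
  set m := s.sup r
  have htail : ∑ j ∈ Ioc k m, #{i ∈ s | j ≤ r i} * (2 * (j : ℝ)) ≤ 4 * N / (k + 1) := by
    have hIoc : Ioc k m = Ioo k (m + 1) := by
      ext
      simp only [mem_Ioc, mem_Ioo, Nat.lt_succ_iff]
    rw [hIoc]
    calc ∑ j ∈ Ioo k (m + 1), #{i ∈ s | j ≤ r i} * (2 * (j : ℝ))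
        ≤ ∑ j ∈ Ioo k (m + 1), 2 * N * ((j : ℝ) ^ 2)⁻¹ := by
          refine sum_le_sum fun j hj => ?_
          have hj0 : (0 : ℝ) < j := by exact_mod_cast (Nat.zero_le k).trans_lt (mem_Ioo.1 hj).1
          rw [← div_eq_mul_inv, le_div_iff₀ (by positivity)]
          linarith [hN j]
      _ ≤ 2 * N * (2 / (k + 1)) := by
          rw [← mul_sum]
          gcongr
          exact sum_Ioo_inv_sq_le k (m + 1)
      _ = 4 * N / (k + 1) := by ring
  calc ∑ i ∈ s, (r i : ℝ) ^ 2
      ≤ ∑ i ∈ s, (k * (r i : ℝ) + ∑ j ∈ Ioc k (r i), 2 * (j : ℝ)) :=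
        sum_le_sum fun i _ => sq_le_mul_add_sum_Ioc k (r i)
    _ = k * ∑ i ∈ s, (r i : ℝ) + ∑ j ∈ Ioc k m, #{i ∈ s | j ≤ r i} * (2 * (j : ℝ)) := by
        rw [sum_add_distrib, ← mul_sum, sum_sum_Ioc_eq_sum_card_mul fun i hi => le_sup hi]
    _ ≤ k * ∑ i ∈ s, (r i : ℝ) + 4 * N / (k + 1) := by gcongr

lemma sum_sq_sq_le_of_card_mul_pow_three_le
    (hN : ∀ t : ℕ, #{i ∈ s | t ≤ r i} * (t : ℝ) ^ 3 ≤ N) :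
    (∑ i ∈ s, (r i : ℝ) ^ 2) ^ 2 ≤ 16 * N * ∑ i ∈ s, (r i : ℝ) := by
  have hN0 : 0 ≤ N := by simpa using hN 0
  set S₁ := ∑ i ∈ s, (r i : ℝ)
  set S₂ := ∑ i ∈ s, (r i : ℝ) ^ 2
  have hS₁ : 0 ≤ S₁ := by positivity
  have hS₂ : 0 ≤ S₂ := by positivity
  -- Optimizing the threshold `T` amounts to a discriminant bound.
  have hquad (T : ℝ) : 0 ≤ S₁ * (T * T) + -S₂ * T + 4 * N := by
    obtain hT | hT := le_or_gt T 0
    · nlinarith [mul_nonneg hS₁ (mul_self_nonneg T), mul_nonneg hS₂ (neg_nonneg.2 hT)]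
    · have hle : S₂ ≤ T * S₁ + 4 * N / T := by
        refine (sum_sq_le_mul_sum_add_div hN ⌊T⌋₊).trans ?_
        gcongr
        · exact Nat.floor_le hT.le
        · exact (Nat.lt_floor_add_one T).le
      have := mul_le_mul_of_nonneg_right hle hT.le
      rw [add_mul, div_mul_cancel₀ _ hT.ne'] at this
      linarith
  have := discrim_le_zero hquad
  rw [discrim] at this
  linarith

end WeakType

lemma sum_pow_three_le_card_mul_sum_mul_sum {ι : Type*} (s : Finset ι) {r f g : ι → ℝ}
    (hr : ∀ i ∈ s, 0 ≤ r i) (hf : ∀ i ∈ s, 0 ≤ f i) (hg : ∀ i ∈ s, 0 ≤ g i)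
    (hrfg : ∀ i ∈ s, r i ^ 3 ≤ f i * g i) :
    (∑ i ∈ s, r i) ^ 3 ≤ #s * ((∑ i ∈ s, f i) * ∑ i ∈ s, g i) := by
  have hsq_sqrt : ∀ i ∈ s, √(r i) ^ 2 = r i := fun i hi => Real.sq_sqrt (hr i hi)
  have h_one : (∑ i ∈ s, r i) ^ 2 ≤ (∑ i ∈ s, √(r i)) * ∑ i ∈ s, r i * √(r i) :=
    sum_sq_le_sum_mul_sum_of_sq_le_mul s (fun i _ => by positivity)
      (fun i hi => mul_nonneg (hr i hi) (by positivity)) fun i hi => by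
        linear_combination -r i * hsq_sqrt i hi
  have h_half : (∑ i ∈ s, √(r i)) ^ 2 ≤ #s * ∑ i ∈ s, r i :=
    sq_sum_le_card_mul_sum_sq.trans_eq (by rw [sum_congr rfl hsq_sqrt])
  have h_three_halves : (∑ i ∈ s, r i * √(r i)) ^ 2 ≤ (∑ i ∈ s, f i) * ∑ i ∈ s, g i :=
    sum_sq_le_sum_mul_sum_of_sq_le_mul s hf hg fun i hi => by
      linear_combination hrfg i hi + r i ^ 2 * hsq_sqrt i hi
  obtain hS | hS := (sum_nonneg hr).eq_or_lt'
  · have := sum_nonneg hf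
    have := sum_nonneg hg
    rw [hS, zero_pow three_ne_zero]
    positivity
  · refine le_of_mul_le_mul_left ?_ hS
    calc (∑ i ∈ s, r i) * (∑ i ∈ s, r i) ^ 3 = ((∑ i ∈ s, r i) ^ 2) ^ 2 := by ring
      _ ≤ ((∑ i ∈ s, √(r i)) * ∑ i ∈ s, r i * √(r i)) ^ 2 := by gcongr
      _ = (∑ i ∈ s, √(r i)) ^ 2 * (∑ i ∈ s, r i * √(r i)) ^ 2 := mul_pow _ _ _
      _ ≤ #s * (∑ i ∈ s, r i) * ((∑ i ∈ s, f i) * ∑ i ∈ s, g i) := by gcongr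
      _ = (∑ i ∈ s, r i) * (#s * ((∑ i ∈ s, f i) * ∑ i ∈ s, g i)) := by ring

section AdditiveEnergy

lemma sum_sum_sq_sum_mul_comm {ι κ R : Type*} [CommSemiring R] (s : Finset ι) (t : Finset κ)
    (F : ι → κ → R) :
    ∑ j ∈ t, ∑ k ∈ t, (∑ i ∈ s, F i j * F i k) ^ 2 =
      ∑ i ∈ s, ∑ l ∈ s, (∑ j ∈ t, F i j * F l j) ^ 2 := by
  simp only [sq, sum_mul_sum]
  calc ∑ j ∈ t, ∑ k ∈ t, ∑ i ∈ s, ∑ l ∈ s, F i j * F i k * (F l j * F l k)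
      = ∑ j ∈ t, ∑ i ∈ s, ∑ l ∈ s, ∑ k ∈ t, F i j * F i k * (F l j * F l k) := by
        refine sum_congr rfl fun j _ => ?_
        rw [sum_comm]
        exact sum_congr rfl fun i _ => sum_comm
    _ = ∑ i ∈ s, ∑ l ∈ s, ∑ j ∈ t, ∑ k ∈ t, F i j * F i k * (F l j * F l k) := by
        rw [sum_comm]
        exact sum_congr rfl fun i _ => sum_comm
    _ = ∑ i ∈ s, ∑ l ∈ s, ∑ j ∈ t, ∑ k ∈ t, F i j * F l j * (F i k * F l k) := by
        simp only [mul_mul_mul_comm]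

variable {G : Type*} [AddCommGroup G] [DecidableEq G]

lemma addConvolution_eq_card_filter (A B : Finset G) (x : G) :
    A.addConvolution B x = #{a ∈ A | a - x ∈ -B} := by
  rw [← card_inter_vadd_neg, ← filter_mem_eq_inter]
  simp only [← neg_vadd_mem_iff, vadd_eq_add, neg_add_eq_sub]

lemma addConvolution_neg_eq_card_filter (A B : Finset G) (x : G) :
    A.addConvolution (-B) x = #{a ∈ A | a - x ∈ B} := by
  rw [addConvolution_eq_card_filter, neg_neg]

lemma sum_addConvolution (A B : Finset G) :
    ∑ x ∈ A + B, A.addConvolution B x = #A * #B := by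
  rw [← card_product]
  exact (card_eq_sum_card_fiberwise fun p hp =>
    add_mem_add (mem_product.1 hp).1 (mem_product.1 hp).2).symm

lemma addEnergy_eq_sum_addConvolution_sq (A B : Finset G) :
    E[A, B] = ∑ x ∈ A + B, A.addConvolution B x ^ 2 :=
  addEnergy_eq_sum_sq' A B

lemma sum_addConvolution_neg_mul (A : Finset G) (h : G → ℕ) :
    ∑ x ∈ A - A, A.addConvolution (-A) x * h x = ∑ a ∈ A, ∑ b ∈ A, h (a - b) := by
  rw [← sum_product', ← sum_fiberwise_of_maps_to (g := fun p => p.1 - p.2) (t := A - A)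
    fun p hp => sub_mem_sub (mem_product.1 hp).1 (mem_product.1 hp).2]
  refine sum_congr rfl fun x _ => ?_
  rw [← card_sub_eq, ← smul_eq_mul, ← sum_const]
  exact sum_congr rfl fun p hp => by rw [(mem_filter.1 hp).2]

lemma addEnergy_eq_sum_addConvolution_neg_mul (A B : Finset G) :
    E[A, B] = ∑ x ∈ A - A, A.addConvolution (-A) x * B.addConvolution (-B) x := by
  rw [sum_addConvolution_neg_mul, sum_comm, ← sum_product', addEnergy, card_filter, sum_product]
  refine sum_congr rfl fun p _ => ?_
  rw [← card_sub_eq, card_filter]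
  refine sum_congr rfl fun q _ => if_congr ?_ rfl rfl
  rw [sub_eq_sub_iff_add_eq_add, add_comm p.1, add_comm p.2, eq_comm, add_comm]

/-- The number of `x ∈ A` with `x - s ∈ A` and `x - t ∈ A`: the third-order analogue of the
representation function of `A - A`. -/
def tripleCount (A : Finset G) (s t : G) : ℕ := #{x ∈ A | x - s ∈ A ∧ x - t ∈ A}

lemma card_filter_sub_mem_sub_mem {A : Finset G} {x y : G} (hx : x ∈ A) :
    #{s ∈ A - A | x - s ∈ A ∧ y - s ∈ A} = A.addConvolution (-A) (x - y) := by
  rw [addConvolution_neg_eq_card_filter]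
  refine card_nbij' (x - ·) (x - ·) (fun s hs => ?_) (fun a ha => ?_) (fun s _ => ?_) fun a _ => ?_
  · simp_all
  · simp only [coe_filter, Set.mem_ofPred_eq] at ha ⊢
    refine ⟨sub_mem_sub hx ha.1, by simpa using ha.1, ?_⟩
    convert ha.2 using 1
    abel
  · exact sub_sub_cancel x s
  · exact sub_sub_cancel x a

lemma sum_tripleCount_sq (A : Finset G) :
    ∑ s ∈ A - A, ∑ t ∈ A - A, tripleCount A s t ^ 2 =
      ∑ u ∈ A - A, A.addConvolution (-A) u ^ 3 := by
  set F : G → G → ℕ := fun x s => if x - s ∈ A then 1 else 0 with hF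
  have hmul (x s y t : G) : F x s * F y t = if x - s ∈ A ∧ y - t ∈ A then 1 else 0 := by
    simp only [hF, ite_and, ite_mul, one_mul, zero_mul]
  calc ∑ s ∈ A - A, ∑ t ∈ A - A, tripleCount A s t ^ 2
      = ∑ s ∈ A - A, ∑ t ∈ A - A, (∑ x ∈ A, F x s * F x t) ^ 2 := by
        simp only [tripleCount, card_filter, hmul]
    _ = ∑ x ∈ A, ∑ y ∈ A, (∑ s ∈ A - A, F x s * F y s) ^ 2 := sum_sum_sq_sum_mul_comm _ _ _
    _ = ∑ x ∈ A, ∑ y ∈ A, A.addConvolution (-A) (x - y) ^ 2 := by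
        refine sum_congr rfl fun x hx => sum_congr rfl fun y _ => ?_
        simp only [hmul, ← card_filter, card_filter_sub_mem_sub_mem hx]
    _ = ∑ u ∈ A - A, A.addConvolution (-A) u ^ 3 := by
        rw [← sum_addConvolution_neg_mul A fun u => A.addConvolution (-A) u ^ 2]
        exact sum_congr rfl fun u _ => (pow_succ' _ 2).symm

lemma sum_tripleCount (A : Finset G) (s : G) :
    ∑ t ∈ A - A, tripleCount A s t = A.addConvolution (-A) s * #A := by
  have hcard : ∀ x ∈ A, #{t ∈ A - A | x - t ∈ A} = #A := fun x hx => by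
    simpa [addConvolution_neg_eq_card_filter] using card_filter_sub_mem_sub_mem (y := x) hx
  calc ∑ t ∈ A - A, tripleCount A s t
      = ∑ t ∈ A - A, #{x ∈ {x ∈ A | x - s ∈ A} | x - t ∈ A} := by
        simp only [tripleCount, filter_filter]
    _ = ∑ x ∈ A with x - s ∈ A, #{t ∈ A - A | x - t ∈ A} :=
        sum_card_bipartiteAbove_eq_sum_card_bipartiteBelow fun t x => x - t ∈ A
    _ = A.addConvolution (-A) s * #A := by
        rw [sum_congr rfl fun x hx => hcard x (mem_filter.1 hx).1, sum_const, smul_eq_mul,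
          addConvolution_neg_eq_card_filter]

lemma addConvolution_neg_mul_card_sq_le (A : Finset G) (s : G) :
    (A.addConvolution (-A) s * #A) ^ 2 ≤
      (A - A).addConvolution (-(A - A)) s * ∑ t ∈ A - A, tripleCount A s t ^ 2 := by
  -- Katz–Koester: `x - s ∈ A` and `x - t ∈ A` give `t - s = (x - s) - (x - t) ∈ A - A`.
  have hsupp : ∀ t ∈ A - A, tripleCount A s t ≠ 0 → t - s ∈ A - A := fun t _ ht => by
    obtain ⟨x, hx⟩ := card_ne_zero.1 ht
    obtain ⟨-, hxs, hxt⟩ := mem_filter.1 hx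
    simpa using sub_mem_sub hxs hxt
  rw [← sum_tripleCount, ← sum_filter_of_ne hsupp, addConvolution_neg_eq_card_filter]
  refine sq_sum_le_card_mul_sum_sq.trans (Nat.mul_le_mul_left _ ?_)
  exact sum_le_sum_of_subset (filter_subset _ _)

lemma card_pow_eight_le_card_sub_mul_addEnergy_mul_sum (A : Finset G) :
    #A ^ 8 ≤ #(A - A) * E[A, A - A] * ∑ u ∈ A - A, A.addConvolution (-A) u ^ 3 := by
  obtain rfl | hA := A.eq_empty_or_nonempty
  · simp
  set r := A.addConvolution (-A)
  set R := (A - A).addConvolution (-(A - A))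
  set e : G → ℕ := fun s => ∑ t ∈ A - A, tripleCount A s t ^ 2
  have hpoint (s : G) : (r s * #A) ^ 3 ≤ #A * (r s * R s) * e s := by
    calc (r s * #A) ^ 3 = #A * r s * (r s * #A) ^ 2 := by ring
      _ ≤ #A * r s * (R s * e s) := by gcongr; exact addConvolution_neg_mul_card_sq_le A s
      _ = #A * (r s * R s) * e s := by ring
  have hsum : ∑ s ∈ A - A, r s = #A * #A := by
    simpa [sub_eq_add_neg] using sum_addConvolution A (-A)
  have hHoelder : (∑ s ∈ A - A, r s * #A) ^ 3 ≤
      #(A - A) * ((∑ s ∈ A - A, #A * (r s * R s)) * ∑ s ∈ A - A, e s) := by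
    have := sum_pow_three_le_card_mul_sum_mul_sum (A - A) (r := fun s => (r s * #A : ℕ))
      (f := fun s => (#A * (r s * R s) : ℕ)) (g := fun s => (e s : ℕ)) (fun _ _ => by positivity)
      (fun _ _ => by positivity) (fun _ _ => by positivity) fun s _ => by exact_mod_cast hpoint s
    exact_mod_cast this
  rw [← sum_mul, hsum, ← mul_sum, ← addEnergy_eq_sum_addConvolution_neg_mul,
    sum_tripleCount_sq] at hHoelder
  refine le_of_mul_le_mul_left ?_ hA.card_pos
  calc #A * #A ^ 8 = (#A * #A * #A) ^ 3 := by ring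
    _ ≤ _ := hHoelder
    _ = _ := by ring

end AdditiveEnergy

section NoZeroDivisors

variable {R : Type*} [Ring R] [NoZeroDivisors R] [DecidableEq R] {A B C : Finset R}

lemma card_image_mul_sub_inter_le_one {p q : R × R} (hp : p.1 ≠ 0) (hpq : p ≠ q) :
    #(A.image (fun a => (a * p.1, a - p.2)) ∩ A.image (fun a => (a * q.1, a - q.2))) ≤ 1 := by
  obtain ⟨c, s⟩ := p
  obtain ⟨d, u⟩ := q
  simp only [card_le_one, mem_inter, mem_image]
  rintro _ ⟨⟨a, -, rfl⟩, ⟨a', -, ha⟩⟩ _ ⟨⟨b, -, rfl⟩, ⟨b', -, hb⟩⟩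
  simp only [Prod.mk.injEq] at ha hb ⊢
  have hsub : a' - b' = a - b := by
    rw [← sub_sub_sub_cancel_right a' b' u, ha.2, hb.2, sub_sub_sub_cancel_right]
  have hmul : (a - b) * d = (a - b) * c := by
    rw [← hsub, sub_mul, ha.1, hb.1, hsub, sub_mul]
  obtain hcd | hab := mul_eq_mul_left_iff.1 hmul
  · subst hcd
    have haa : a' = a := mul_right_cancel₀ hp ha.1
    exact absurd (by simpa [haa, eq_comm] using ha.2) hpq
  · simp [sub_eq_zero.1 hab]

lemma card_mul_card_add_le (hC : ∀ c ∈ C, c ≠ 0) (hA : ∃ a ∈ A, a ≠ 0) :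
    #C * #(A + B) ≤ #(A * C) ^ 2 * #B ^ 2 := by
  obtain ⟨a, ha, ha0⟩ := hA
  obtain rfl | ⟨c, hc⟩ := C.eq_empty_or_nonempty
  · simp
  calc #C * #(A + B) ≤ #(A * C) * (#A * #B) :=
        Nat.mul_le_mul (card_le_card_mul_left₀ ha ha0) card_add_le
    _ ≤ #(A * C) * (#(A * C) * #B ^ 2) := by
        gcongr #(A * C) * (?_ * ?_)
        · exact card_le_card_mul_right₀ hc (hC c hc)
        · exact Nat.le_self_pow two_ne_zero _
    _ = #(A * C) ^ 2 * #B ^ 2 := by ring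

end NoZeroDivisors

section OrderedRing

variable {R : Type*} [Ring R] [LinearOrder R] [IsStrictOrderedRing R] {A B C : Finset R}

lemma isChain_image_mul_sub {p : R × R} (hp : 0 ≤ p.1) :
    IsChain (· ≤ ·) (A.image (fun a => (a * p.1, a - p.2)) : Set (R × R)) := by
  have hmono : Monotone fun a => (a * p.1, a - p.2) := fun a b hab =>
    ⟨mul_le_mul_of_nonneg_right hab hp, sub_le_sub_right hab _⟩
  rw [coe_image]
  exact hmono.isChain_image (isChain_of_trichotomous _)

lemma card_mul_card_filter_le_addConvolution_mul_pow_three_le (hC : ∀ c ∈ C, 0 < c)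
    (hA : ∃ a ∈ A, a ≠ 0) (t : ℕ) :
    #C * #{x ∈ A + B | t ≤ A.addConvolution B x} * t ^ 3 ≤ 100 * (#(A * C) ^ 2 * #B ^ 2) := by
  set S := {x ∈ A + B | t ≤ A.addConvolution B x}
  obtain ht | ht := Nat.lt_or_ge 1 t
  · obtain hempty | ⟨⟨c, x⟩, hcx⟩ := (C ×ˢ S).eq_empty_or_nonempty
    · simp [← card_product, hempty]
    obtain ⟨hc, hx⟩ := mem_product.1 hcx
    have hx : t ≤ A.addConvolution B x := (mem_filter.1 hx).2
    set P : R × R → Finset (R × R) := fun p =>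
      {a ∈ A | a - p.2 ∈ -B}.image fun a => (a * p.1, a - p.2)
    rw [← card_product, ← card_neg B]
    refine card_mul_pow_three_le_of_isChain (P := P) (fun p hp => ?_) (fun p hp => ?_)
      (fun p hp => ?_) (fun p hp q _ hpq => ?_) ht ?_ ?_
    · exact isChain_image_mul_sub (hC _ (mem_product.1 hp).1).le
    · simp only [P, image_subset_iff, mem_filter, mem_product]
      exact fun a ha => ⟨mul_mem_mul ha.1 (mem_product.1 hp).1, ha.2⟩
    · rw [card_image_of_injective _ fun a b hab => by simpa using congrArg Prod.snd hab,
        ← addConvolution_eq_card_filter]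
      exact (mem_filter.1 (mem_product.1 hp).2).2
    · refine (card_le_card ?_).trans (card_image_mul_sub_inter_le_one (A := A)
        (hC _ (mem_product.1 hp).1).ne' hpq)
      exact inter_subset_inter (image_subset_image (filter_subset _ _))
        (image_subset_image (filter_subset _ _))
    · exact (hx.trans addConvolution_le_card_left).trans (card_le_card_mul_right₀ hc (hC c hc).ne')
    · exact (hx.trans addConvolution_le_card_right).trans_eq (card_neg B).symm
  · calc #C * #S * t ^ 3 ≤ #C * #(A + B) * 1 ^ 3 := by gcongr; exact filter_subset _ _
      _ ≤ #(A * C) ^ 2 * #B ^ 2 := by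
        simpa using card_mul_card_add_le (fun c hc => (hC c hc).ne') hA
      _ ≤ 100 * (#(A * C) ^ 2 * #B ^ 2) := Nat.le_mul_of_pos_left _ (by norm_num)

lemma card_filter_le_addConvolution_mul_pow_three_le (hC : ∀ c ∈ C, 0 < c) (hC₀ : C.Nonempty)
    (hA : ∃ a ∈ A, a ≠ 0) (t : ℕ) :
    #{x ∈ A + B | t ≤ A.addConvolution B x} * (t : ℝ) ^ 3 ≤
      100 * (#(A * C) ^ 2 * #B ^ 2) / #C := by
  rw [le_div_iff₀' (by exact_mod_cast hC₀.card_pos), ← mul_assoc]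
  exact_mod_cast card_mul_card_filter_le_addConvolution_mul_pow_three_le hC hA t

lemma card_mul_addEnergy_sq_le (hC : ∀ c ∈ C, 0 < c) (hA : ∃ a ∈ A, a ≠ 0) :
    #C * E[A, B] ^ 2 ≤ 1600 * (#(A * C) ^ 2 * #B ^ 3 * #A) := by
  obtain rfl | hC₀ := C.eq_empty_or_nonempty
  · simp
  have hCpos : (0 : ℝ) < #C := by exact_mod_cast hC₀.card_pos
  have h := sum_sq_sq_le_of_card_mul_pow_three_le
    (card_filter_le_addConvolution_mul_pow_three_le (B := B) hC hC₀ hA)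
  have hsum : ∑ x ∈ A + B, (A.addConvolution B x : ℝ) = #A * #B := by
    exact_mod_cast sum_addConvolution A B
  have henergy : ∑ x ∈ A + B, (A.addConvolution B x : ℝ) ^ 2 = E[A, B] := by
    exact_mod_cast (addEnergy_eq_sum_addConvolution_sq A B).symm
  rw [hsum, henergy, mul_div_assoc', div_mul_eq_mul_div, le_div_iff₀' hCpos] at h
  have h' : (#C * E[A, B] ^ 2 : ℝ) ≤ 1600 * (#(A * C) ^ 2 * #B ^ 3 * #A) := h.trans_eq (by ring)
  exact_mod_cast h'

lemma card_mul_sum_addConvolution_pow_three_le (hC : ∀ c ∈ C, 0 < c) (hA : ∃ a ∈ A, a ≠ 0) :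
    (#C * (∑ x ∈ A + B, A.addConvolution B x ^ 3 : ℕ) : ℝ) ≤
      300 * (#(A * C) ^ 2 * #B ^ 2) * (1 + Real.log #A) := by
  obtain rfl | hC₀ := C.eq_empty_or_nonempty
  · simp
  have hCpos : (0 : ℝ) < #C := by exact_mod_cast hC₀.card_pos
  have h := sum_pow_three_le_of_card_mul_pow_three_le
    (fun x _ => addConvolution_le_card_left (A := A) (B := B) (x := x))
    (card_filter_le_addConvolution_mul_pow_three_le (B := B) hC hC₀ hA)
  rw [mul_div_assoc', div_mul_eq_mul_div, le_div_iff₀' hCpos] at h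
  push_cast
  linarith

lemma card_pow_three_mul_card_pow_eleven_le (hC : ∀ c ∈ C, 0 < c) (hA : ∃ a ∈ A, a ≠ 0) :
    (#C ^ 3 * #A ^ 11 : ℝ) ≤
      1600 * 300 ^ 2 * (#(A * C) ^ 6 * #(A - A) ^ 5) * (1 + Real.log #A) ^ 2 := by
  set S := ∑ x ∈ A - A, A.addConvolution (-A) x ^ 3 with hS
  have henergy : (#C * E[A, A - A] ^ 2 : ℝ) ≤ 1600 * (#(A * C) ^ 2 * #(A - A) ^ 3 * #A) := by
    exact_mod_cast card_mul_addEnergy_sq_le hC hA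
  have hcube : (#C * S : ℝ) ≤ 300 * (#(A * C) ^ 2 * #A ^ 2) * (1 + Real.log #A) := by
    simpa only [hS, sub_eq_add_neg, card_neg] using
      card_mul_sum_addConvolution_pow_three_le (B := -A) hC hA
  have hApos : (0 : ℝ) < #A := by exact_mod_cast card_pos.2 (hA.imp fun _ h => h.1)
  have hpow : (#A ^ 8 : ℝ) ≤ #(A - A) * E[A, A - A] * S := by
    exact_mod_cast card_pow_eight_le_card_sub_mul_addEnergy_mul_sum A
  refine le_of_mul_le_mul_left ?_ (pow_pos hApos 5)
  calc (#A ^ 5 * (#C ^ 3 * #A ^ 11) : ℝ) = #C ^ 3 * (#A ^ 8) ^ 2 := by ring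
    _ ≤ #C ^ 3 * (#(A - A) * E[A, A - A] * S) ^ 2 := by gcongr
    _ = #(A - A) ^ 2 * (#C * E[A, A - A] ^ 2) * (#C * S) ^ 2 := by ring
    _ ≤ #(A - A) ^ 2 * (1600 * (#(A * C) ^ 2 * #(A - A) ^ 3 * #A)) *
        (300 * (#(A * C) ^ 2 * #A ^ 2) * (1 + Real.log #A)) ^ 2 := by gcongr
    _ = _ := by ring

lemma exists_pos_card_le_card_mul_le (A : Finset R) :
    ∃ C : Finset R, (∀ c ∈ C, 0 < c) ∧ #A ≤ 2 * #C + 1 ∧ #(A * C) ≤ #(A * A) := by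
  have hcard : #A ≤ #{a ∈ A | 0 < a} + #{a ∈ A | a < 0} + 1 := by
    calc #A ≤ #({a ∈ A | 0 < a} ∪ {a ∈ A | a < 0} ∪ {0}) := card_le_card fun a ha => by
          obtain h | h | h := lt_trichotomy a 0 <;> simp [ha, h]
      _ ≤ _ := (card_union_le _ _).trans (Nat.add_le_add_right (card_union_le _ _) _)
  obtain h | h := le_total #{a ∈ A | a < 0} #{a ∈ A | 0 < a}
  · refine ⟨{a ∈ A | 0 < a}, fun c hc => (mem_filter.1 hc).2, by lia, ?_⟩
    exact card_le_card (mul_subset_mul_left (filter_subset _ _))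
  · refine ⟨-{a ∈ A | a < 0}, fun c hc => ?_, by rw [card_neg]; lia, ?_⟩
    · simpa using (mem_filter.1 (mem_neg'.1 hc)).2
    · rw [mul_neg, card_neg]
      exact card_le_card (mul_subset_mul_left (filter_subset _ _))

end OrderedRing

theorem stmt16_general : ∃ K : ℝ, 0 < K ∧
    ∀ (R : Type*) [Ring R] [LinearOrder R] [IsStrictOrderedRing R] (A : Finset R), 2 ≤ #A →
      (#(A * A) : ℝ) ^ 6 * (#(A - A) : ℝ) ^ 5 ≥ K * (#A : ℝ) ^ 14 / (Real.log #A) ^ 2 := by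
  refine ⟨(64 * 1600 * 300 ^ 2 * 9)⁻¹, by norm_num, fun R _ _ _ A hA => ?_⟩
  obtain ⟨C, hC, hAC, hmul⟩ := exists_pos_card_le_card_mul_le A
  have hlog : Real.log 2 ≤ Real.log #A := Real.log_le_log two_pos (by exact_mod_cast hA)
  have hlog_pos : 0 < Real.log #A := (Real.log_pos one_lt_two).trans_le hlog
  rw [ge_iff_le, div_le_iff₀ (by positivity), inv_mul_le_iff₀ (by norm_num)]
  calc (#A ^ 14 : ℝ) = #A ^ 3 * #A ^ 11 := by ring
    _ ≤ (4 * #C) ^ 3 * #A ^ 11 := by gcongr; exact_mod_cast (by lia : #A ≤ 4 * #C)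
    _ = 64 * (#C ^ 3 * #A ^ 11) := by ring
    _ ≤ 64 * (1600 * 300 ^ 2 * (#(A * C) ^ 6 * #(A - A) ^ 5) * (1 + Real.log #A) ^ 2) := by
      gcongr 64 * ?_
      exact card_pow_three_mul_card_pow_eleven_le hC ((one_lt_card_iff_nontrivial.1 hA).exists_ne 0)
    _ ≤ 64 * (1600 * 300 ^ 2 * (#(A * A) ^ 6 * #(A - A) ^ 5) * (3 * Real.log #A) ^ 2) := by
      gcongr
      linarith [Real.log_two_gt_d9]
    _ = _ := by ring

theorem stmt16 : ∃ K : ℝ, 0 < K ∧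
    ∀ A : Finset ℝ, (∀ a ∈ A, 0 < a) → 2 ≤ A.card →
    ((A * A).card : ℝ) ^ 6 * ((A - A).card : ℝ) ^ 5 ≥
      K * (A.card : ℝ) ^ 14 / (Real.log A.card) ^ 2 :=
  let ⟨K, hK, h⟩ := stmt16_general
  ⟨K, hK, fun A _ hA => h ℝ A hA⟩
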